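/- arXiv:1710.07131 — 3 statements merged into one kernel-verified Lean document; each statement's English description precedes it below -/
import Mathlib

section
/- Let μ be a Borel probability measure on ℝ such that |μ̂(ξ)| = O(|ξ|^{−γ}) as |ξ| → ∞ for some γ > 0. Then for every strictly increasing sequence (s_n)_{n≥1} of positive integers, for μ-almost every x the sequence (s_n x)_{n≥1} is equidistributed modulo 1; in particular, μ-almost every x is normal in every integer base b ≥ 2. -/
open MeasureTheory Real Filter Asymptotics

/-- A sequence `(x n)_{n ≥ 1}` of real numbers is equidistributed modulo 1: for every
subinterval `[a, b] ⊆ [0, 1]`, the proportion of indices `1 ≤ n ≤ N` whose fractional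
part lies in `[a, b]` tends to `b - a`. -/
def EquidistributedMod1 (x : ℕ → ℝ) : Prop :=
  ∀ a b : ℝ, 0 ≤ a → a ≤ b → b ≤ 1 →
    Tendsto (fun N : ℕ =>
        (((Finset.Icc 1 N).filter fun n => Int.fract (x n) ∈ Set.Icc a b).card : ℝ) / N)
      atTop (nhds (b - a))

lemma integral_fourier_zero (h : ℤ) (hh : h ≠ 0) :
    ∫ t : UnitAddCircle, fourier h t = 0 := by
  have h1 := congrFun (fourierCoeff_fourier (T := 1) h) 0
  rw [Pi.single_eq_of_ne (Ne.symm hh)] at h1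
  simpa [fourierCoeff, AddCircle.integral_haarAddCircle] using h1

lemma weyl_cont (y : ℕ → UnitAddCircle)
    (hy : ∀ h : ℤ, h ≠ 0 → Tendsto (fun N : ℕ => (∑ n ∈ Finset.range N, fourier h (y n)) / (N : ℂ))
      atTop (nhds 0)) (f : C(UnitAddCircle, ℂ)) :
    Tendsto (fun N : ℕ => (∑ n ∈ Finset.range N, f (y n)) / (N : ℂ)) atTop
      (nhds (∫ t, f t)) := by
  have gIntegrable : ∀ g : C(UnitAddCircle, ℂ), Integrable g (volume : Measure UnitAddCircle) :=
    fun g => g.continuous.integrable_of_hasCompactSupport (HasCompactSupport.of_compactSpace _)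
  have hspan : ∀ g ∈ Submodule.span ℂ (Set.range (@fourier 1)),
      Tendsto (fun N : ℕ => (∑ n ∈ Finset.range N, g (y n)) / (N : ℂ)) atTop
      (nhds (∫ t, g t)) := by
    intro g hg
    induction hg using Submodule.span_induction with
    | mem g hg =>
      obtain ⟨h, rfl⟩ := hg
      by_cases hh : h = 0
      · subst hh
        apply tendsto_const_nhds.congr'
        filter_upwards [eventually_gt_atTop 0] with N hN
        have : (N : ℂ) ≠ 0 := by exact_mod_cast hN.ne'
        simp [this, measureReal_def]
      · have := hy h hh
        rw [← integral_fourier_zero h hh] at this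
        exact this
    | zero => simp
    | add f g _ _ hf hg =>
      have := hf.add hg
      rw [← integral_add (gIntegrable f) (gIntegrable g)] at this
      refine this.congr fun N => ?_
      simp [Finset.sum_add_distrib, add_div]
    | smul c f _ hf =>
      have := hf.const_mul c
      rw [← integral_const_mul] at this
      refine this.congr fun N => ?_
      simp only [ContinuousMap.coe_smul, Pi.smul_apply, smul_eq_mul]
      rw [← Finset.mul_sum, mul_div_assoc]
  have hf : f ∈ (Submodule.span ℂ (Set.range (@fourier 1))).topologicalClosure := by
    rw [span_fourier_closure_eq_top]; trivial
  rw [← SetLike.mem_coe, Submodule.topologicalClosure_coe, Metric.mem_closure_iff] at hf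
  rw [Metric.tendsto_atTop]
  intro ε hε
  obtain ⟨g, hg, hfg⟩ := hf (ε / 3) (by positivity)
  obtain ⟨M, hM⟩ := Metric.tendsto_atTop.1 (hspan g hg) (ε / 3) (by positivity)
  refine ⟨max M 1, fun N hN => ?_⟩
  have hN0 : (0 : ℝ) < N := by
    have : 1 ≤ N := le_trans (le_max_right _ _) hN
    exact_mod_cast this
  have h1 := hM N (le_trans (le_max_left _ _) hN)
  have hpt : ∀ t, ‖f t - g t‖ ≤ ε / 3 := fun t => by
    rw [← dist_eq_norm]; exact (ContinuousMap.dist_apply_le_dist t).trans hfg.le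
  have h2 : ‖(∑ n ∈ Finset.range N, f (y n)) / (N : ℂ) - (∑ n ∈ Finset.range N, g (y n)) / (N : ℂ)‖
      ≤ ε / 3 := by
    rw [← sub_div, ← Finset.sum_sub_distrib, norm_div, Complex.norm_natCast, div_le_iff₀ hN0]
    refine (norm_sum_le _ _).trans ((Finset.sum_le_sum fun n _ => hpt (y n)).trans ?_)
    simp [mul_comm]
  have h3 : ‖(∫ t, g t) - ∫ t, f t‖ ≤ ε / 3 := by
    rw [← integral_sub (gIntegrable g) (gIntegrable f)]
    refine (norm_integral_le_of_norm_le_const (C := ε / 3) (ae_of_all _ fun t => ?_)).trans ?_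
    · rw [norm_sub_rev]; exact hpt t
    · simp [measureReal_def]
  rw [dist_eq_norm] at h1 ⊢
  calc _ = ‖((∑ n ∈ Finset.range N, f (y n)) / (N : ℂ) - (∑ n ∈ Finset.range N, g (y n)) / (N : ℂ))
        + ((∑ n ∈ Finset.range N, g (y n)) / (N : ℂ) - ∫ t, g t) + ((∫ t, g t) - ∫ t, f t)‖ := by
        congr 1; ring
    _ ≤ _ := norm_add₃_le
    _ < ε := by linarith

/-- The subset of the circle corresponding to `[a,b]`. -/
def arc (a b : ℝ) : Set UnitAddCircle := (fun t : ℝ => (t : UnitAddCircle)) '' (Set.Icc a b ∩ Set.Ico 0 1)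

lemma mem_arc (a b t : ℝ) : (t : UnitAddCircle) ∈ arc a b ↔ Int.fract t ∈ Set.Icc a b := by
  have hfr : ((Int.fract t : ℝ) : UnitAddCircle) = t := by
    rw [Int.fract]
    simp
  have hI : ∀ t, Int.fract t ∈ Set.Ico (0:ℝ) (0 + 1) := fun t => ⟨Int.fract_nonneg _, by simpa using Int.fract_lt_one t⟩
  constructor
  · rintro ⟨u, ⟨hu, hu'⟩, h⟩
    have h' : (u : UnitAddCircle) = (Int.fract t : ℝ) := by rw [hfr]; exact h
    rw [AddCircle.coe_eq_coe_iff_of_mem_Ico (a := 0) (by simpa using hu') (hI t)] at h'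
    rwa [← h']
  · intro h
    exact ⟨Int.fract t, ⟨h, by simpa using hI t⟩, hfr⟩

lemma frontier_arc (a b : ℝ) (ha : 0 ≤ a) (hb : b ≤ 1) :
    frontier (arc a b) ⊆ {(a : UnitAddCircle), (b : UnitAddCircle)} := by
  have hK : IsClosed ((fun t : ℝ => (t : UnitAddCircle)) '' Set.Icc a b) :=
    (isCompact_Icc.image (AddCircle.continuous_mk' 1)).isClosed
  have hU : IsOpen ((fun t : ℝ => (t : UnitAddCircle)) '' Set.Ioo a b) :=
    QuotientAddGroup.isOpenMap_coe _ isOpen_Ioo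
  have h1 : closure (arc a b) ⊆ (fun t : ℝ => (t : UnitAddCircle)) '' Set.Icc a b :=
    hK.closure_subset_iff.2 (Set.image_mono Set.inter_subset_left)
  have h2 : (fun t : ℝ => (t : UnitAddCircle)) '' Set.Ioo a b ⊆ interior (arc a b) :=
    hU.subset_interior_iff.2 (Set.image_mono fun t ht =>
      ⟨⟨ht.1.le, ht.2.le⟩, ⟨ha.trans ht.1.le, ht.2.trans_le hb⟩⟩)
  rintro z ⟨hz, hz'⟩
  obtain ⟨t, ht, rfl⟩ := h1 hz
  rcases eq_or_lt_of_le ht.1 with h | h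
  · left; simp [h]
  rcases eq_or_lt_of_le ht.2 with h' | h'
  · right; simp [h']
  exact absurd (h2 ⟨t, ⟨h, h'⟩, rfl⟩) hz'

lemma volume_point (z : UnitAddCircle) : volume ({z} : Set UnitAddCircle) = 0 := by
  have := AddCircle.volume_closedBall 1 (x := z) 0
  simpa using this

lemma volume_frontier_arc (a b : ℝ) (ha : 0 ≤ a) (hb : b ≤ 1) :
    volume (frontier (arc a b)) = 0 := by
  refine measure_mono_null (frontier_arc a b ha hb) ?_
  rw [Set.insert_eq]
  exact measure_union_null (volume_point _) (volume_point _)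

lemma volume_arc (a b : ℝ) (ha : 0 ≤ a) (hab : a ≤ b) (hb : b ≤ 1) :
    volume (arc a b) = ENNReal.ofReal (b - a) := by
  have hn : NullMeasurableSet (arc a b) volume :=
    nullMeasurableSet_of_null_frontier (volume_frontier_arc a b ha hb)
  have hm := UnitAddCircle.measurePreserving_mk 0
  rw [← hm.measure_preimage hn, Measure.restrict_apply₀' measurableSet_Ioc.nullMeasurableSet]
  rw [← Real.volume_Icc]
  have h01 : volume ({0, 1} : Set ℝ) = 0 := (Set.toFinite _).measure_zero _
  apply measure_congr
  have : ∀ᵐ t : ℝ, t ∉ ({0, 1} : Set ℝ) := by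
    rw [ae_iff]; simpa only [not_not, Set.setOf_mem_eq] using h01
  filter_upwards [this] with t ht
  simp only [Set.mem_insert_iff, Set.mem_singleton_iff, not_or] at ht
  refine propext ?_
  change ((t : UnitAddCircle) ∈ arc a b ∧ t ∈ Set.Ioc 0 (0 + 1)) ↔ t ∈ Set.Icc a b
  rw [mem_arc, zero_add]
  constructor
  · rintro ⟨h, h'⟩
    rwa [Int.fract_eq_self.2 ⟨h'.1.le, lt_of_le_of_ne h'.2 ht.2⟩] at h
  · intro h
    have h0 : 0 < t := lt_of_le_of_ne (ha.trans h.1) (Ne.symm ht.1)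
    have h1 : t < 1 := lt_of_le_of_ne (h.2.trans hb) ht.2
    rw [Int.fract_eq_self.2 ⟨h0.le, h1⟩]
    exact ⟨h, h0, h1.le⟩

/-- Empirical measure. -/
noncomputable def empi (y : ℕ → UnitAddCircle) (N : ℕ) : Measure UnitAddCircle :=
  ((N : ENNReal) + 1)⁻¹ • ∑ n ∈ Finset.range (N + 1), Measure.dirac (y n)

instance (y : ℕ → UnitAddCircle) (N : ℕ) : IsProbabilityMeasure (empi y N) := ⟨by
  simp only [empi, Measure.smul_apply, Measure.finsetSum_apply, measure_univ, smul_eq_mul]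
  simp
  exact ENNReal.inv_mul_cancel (by simp) (by finiteness)⟩

open Classical in
lemma weyl_criterion (x : ℕ → ℝ)
    (hx : ∀ h : ℤ, h ≠ 0 → Tendsto (fun N : ℕ =>
      (∑ n ∈ Finset.range N, fourier h ((x (n + 1) : ℝ) : UnitAddCircle)) / (N : ℂ))
      atTop (nhds 0)) : EquidistributedMod1 x := by
  intro a b ha hab hb
  set y : ℕ → UnitAddCircle := fun n => ((x (n + 1) : ℝ) : UnitAddCircle) with hy
  let P : ℕ → ProbabilityMeasure UnitAddCircle := fun N => ⟨empi y N, inferInstance⟩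
  have : IsProbabilityMeasure (volume : Measure UnitAddCircle) := ⟨by simp⟩
  let Q : ProbabilityMeasure UnitAddCircle := ⟨volume, inferInstance⟩
  have hPQ : Tendsto P atTop (nhds Q) := by
    rw [ProbabilityMeasure.tendsto_iff_forall_integral_rclike_tendsto ℂ]
    intro f
    have h1 := (tendsto_add_atTop_iff_nat 1).2 (weyl_cont y hx f.toContinuousMap)
    refine h1.congr fun N => ?_
    change _ = ∫ ω, f ω ∂(empi y N)
    rw [empi, integral_smul_measure, integral_finsetSum_measure]
    · simp [div_eq_inv_mul, ENNReal.toReal_add]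
    · intro i _
      exact f.integrable _
  have h2 := ProbabilityMeasure.tendsto_measure_of_null_frontier_of_tendsto' hPQ
    (E := arc a b) (volume_frontier_arc a b ha hb)
  have h3 : Tendsto (fun N => ((empi y N) (arc a b)).toReal) atTop (nhds (b - a)) := by
    have h4 := (ENNReal.tendsto_toReal (measure_ne_top volume (arc a b))).comp h2
    rw [volume_arc a b ha hab hb, ENNReal.toReal_ofReal (by linarith)] at h4
    exact h4
  rw [← tendsto_add_atTop_iff_nat 1]
  refine h3.congr fun N => ?_
  have hd : ∀ n, Measure.dirac (y n) (arc a b) = if y n ∈ arc a b then 1 else 0 := by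
    intro n
    rw [Measure.dirac_apply]
    simp [Set.indicator_apply]
  rw [empi, Measure.smul_apply, Measure.finsetSum_apply, smul_eq_mul, Finset.sum_congr rfl fun n _ => hd n]
  rw [Finset.sum_boole, ENNReal.toReal_mul, div_eq_inv_mul]
  congr 1
  · simp [ENNReal.toReal_add]
  · rw [ENNReal.toReal_natCast]
    congr 1
    refine Finset.card_bij (fun n _ => n + 1) ?_ ?_ ?_
    · intro n hn
      simp only [Finset.mem_filter, Finset.mem_range, hy, mem_arc] at hn
      simp only [Finset.mem_filter, Finset.mem_Icc]
      exact ⟨⟨by omega, by omega⟩, hn.2⟩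
    · intro n _ m _ h; omega
    · intro n hn
      simp only [Finset.mem_filter, Finset.mem_Icc] at hn
      obtain ⟨⟨h1, h2⟩, h3⟩ := hn
      refine ⟨n - 1, ?_, by omega⟩
      simp only [Finset.mem_filter, Finset.mem_range, hy, mem_arc]
      rw [Nat.sub_add_cancel h1]
      exact ⟨by omega, h3⟩

/-- Fourier transform. -/
noncomputable def ft (μ : Measure ℝ) (ξ : ℝ) : ℂ :=
  ∫ t, Complex.exp (2 * Real.pi * Complex.I * ξ * t) ∂μ

lemma norm_expI (ξ t : ℝ) : ‖Complex.exp (2 * Real.pi * Complex.I * ξ * t)‖ = 1 := by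
  have : (2 * Real.pi * Complex.I * ξ * t : ℂ) = ((2 * Real.pi * ξ * t : ℝ) : ℂ) * Complex.I := by
    push_cast; ring
  rw [this, Complex.norm_exp_ofReal_mul_I]

lemma integrable_expI (μ : Measure ℝ) [IsProbabilityMeasure μ] (ξ : ℝ) :
    Integrable (fun t : ℝ => Complex.exp (2 * Real.pi * Complex.I * ξ * t)) μ := by
  refine (integrable_const (1 : ℝ)).mono' (by fun_prop) (ae_of_all _ fun t => ?_)
  rw [norm_expI]

lemma ft_norm_le (μ : Measure ℝ) [IsProbabilityMeasure μ] (ξ : ℝ) : ‖ft μ ξ‖ ≤ 1 := by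
  refine (norm_integral_le_of_norm_le_const (C := 1) (ae_of_all _ fun t => ?_)).trans ?_
  · rw [norm_expI]
  · simp

lemma decay_int (μ : Measure ℝ) [IsProbabilityMeasure μ] (γ : ℝ) (hγ : 0 < γ)
    (hdecay : (fun ξ : ℝ => ft μ ξ) =O[Filter.cocompact ℝ] fun ξ : ℝ => |ξ| ^ (-γ)) :
    ∃ C : ℝ, 0 ≤ C ∧ ∃ δ : ℝ, 0 < δ ∧ δ ≤ 1 / 2 ∧ ∀ ξ : ℝ, ‖ft μ ξ‖ ≤ C * (|ξ| + 1) ^ (-δ) := by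
  obtain ⟨c, hc0, hc⟩ := hdecay.exists_pos
  rw [IsBigOWith] at hc
  have hcc : cocompact ℝ = comap (fun x : ℝ => ‖x‖) atTop := (comap_norm_atTop).trans
    Metric.cobounded_eq_cocompact |>.symm
  rw [hcc, eventually_comap, eventually_atTop] at hc
  obtain ⟨R, hR⟩ := hc
  set δ := min γ (1 / 2) with hδ
  have hδ0 : 0 < δ := lt_min hγ (by norm_num)
  have hδγ : δ ≤ γ := min_le_left _ _
  set R' := max R 1 with hR'
  have hR1 : 1 ≤ R' := le_max_right _ _
  refine ⟨c * 2 ^ δ + (R' + 1) ^ δ, by positivity, δ, hδ0, min_le_right _ _, fun ξ => ?_⟩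
  have hpos : 0 < |ξ| + 1 := by positivity
  rw [add_mul]
  by_cases h : R' ≤ |ξ|
  · have h1 := hR |ξ| ((le_max_left _ _).trans h) ξ rfl
    have hx1 : 1 ≤ |ξ| := hR1.trans h
    have h2 : |ξ| ^ (-γ) ≤ 2 ^ δ * (|ξ| + 1) ^ (-δ) := by
      calc |ξ| ^ (-γ) ≤ |ξ| ^ (-δ) := Real.rpow_le_rpow_of_exponent_le hx1 (by linarith)
        _ ≤ ((|ξ| + 1) / 2) ^ (-δ) :=
          Real.rpow_le_rpow_of_nonpos (by positivity) (by linarith) (by linarith)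
        _ = _ := by
          rw [Real.div_rpow hpos.le (by norm_num), Real.rpow_neg (by norm_num : (0:ℝ) ≤ 2)]
          field_simp
    rw [Real.norm_of_nonneg (by positivity)] at h1
    have h3 := mul_le_mul_of_nonneg_left h2 hc0.le
    have h4 : 0 ≤ (R' + 1) ^ δ * (|ξ| + 1) ^ (-δ) := by positivity
    linarith
  · push Not at h
    have h1 := ft_norm_le μ ξ
    have h2 : 1 ≤ (R' + 1) ^ δ * (|ξ| + 1) ^ (-δ) := by
      rw [Real.rpow_neg hpos.le, ← div_eq_mul_inv, one_le_div (by positivity)]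
      exact Real.rpow_le_rpow hpos.le (by linarith) hδ0.le
    have h4 : 0 ≤ c * 2 ^ δ * (|ξ| + 1) ^ (-δ) := by positivity
    linarith

lemma sum_pow_le (δ : ℝ) (hδ : 0 < δ) (hδ' : δ ≤ 1 / 2) (N : ℕ) :
    ∑ k ∈ Finset.range N, ((k : ℝ) + 1) ^ (-δ) ≤ 2 * (N : ℝ) ^ (1 - δ) := by
  induction N with
  | zero => simp [Real.zero_rpow (show (1 - δ) ≠ 0 by linarith)]
  | succ N ih =>
    rw [Finset.sum_range_succ]
    have hN : (0 : ℝ) < (N : ℝ) + 1 := by positivity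
    have hb := rpow_one_add_le_one_add_mul_self (s := -1 / ((N : ℝ) + 1))
      (by rw [le_div_iff₀ hN]; have : (0:ℝ) ≤ N := by positivity
          linarith) (p := 1 - δ) (by linarith) (by linarith)
    have he : 1 + -1 / ((N : ℝ) + 1) = N / ((N : ℝ) + 1) := by field_simp; ring
    rw [he, Real.div_rpow (by positivity) hN.le, div_le_iff₀ (by positivity)] at hb
    have hs : ((N : ℝ) + 1) ^ (1 - δ) = ((N : ℝ) + 1) * ((N : ℝ) + 1) ^ (-δ) := by
      rw [sub_eq_add_neg, Real.rpow_add hN, Real.rpow_one]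
    push_cast
    have hp : 0 ≤ ((N : ℝ) + 1) ^ (-δ) := by positivity
    have h5 : (1 + (1 - δ) * (-1 / ((N : ℝ) + 1))) * ((N : ℝ) + 1) ^ (1 - δ)
       = ((N : ℝ) + 1) ^ (1 - δ) - (1 - δ) * ((N : ℝ) + 1) ^ (-δ) := by
      rw [hs]; field_simp; ring
    rw [h5] at hb
    nlinarith

lemma sum_abs_le (g : ℕ → ℝ) (hg : ∀ k, 0 ≤ g k) (N m : ℕ) (hm : m < N) :
    ∑ n ∈ Finset.range N, g (((m : ℤ) - n).natAbs) ≤ 2 * ∑ k ∈ Finset.range N, g k := by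
  rw [← Finset.sum_range_add_sum_Ico _ hm.le, Finset.sum_Ico_eq_sum_range]
  have h1 : ∑ n ∈ Finset.range m, g (((m : ℤ) - n).natAbs) ≤ ∑ k ∈ Finset.range N, g k := by
    calc _ = ∑ n ∈ Finset.range m, g (n + 1) := by
          rw [← Finset.sum_range_reflect]
          refine Finset.sum_congr rfl fun n hn => ?_
          rw [Finset.mem_range] at hn
          congr 1; omega
      _ ≤ ∑ n ∈ Finset.range (m + 1), g n := by
          rw [Finset.sum_range_succ']; linarith [hg 0]
      _ ≤ _ := Finset.sum_le_sum_of_subset_of_nonneg (Finset.range_mono hm) fun k _ _ => hg k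
  have h2 : ∑ i ∈ Finset.range (N - m), g (((m : ℤ) - ((m + i : ℕ) : ℤ)).natAbs)
      ≤ ∑ k ∈ Finset.range N, g k := by
    calc _ = ∑ n ∈ Finset.range (N - m), g n := by
          refine Finset.sum_congr rfl fun n hn => ?_
          congr 1; omega
      _ ≤ _ := Finset.sum_le_sum_of_subset_of_nonneg (Finset.range_mono (by omega)) fun k _ _ => hg k
  linarith

/-- Exponential sum. -/
noncomputable def es (s : ℕ → ℕ) (h : ℤ) (N : ℕ) (t : ℝ) : ℂ :=
  ∑ n ∈ Finset.range N, Complex.exp (2 * Real.pi * Complex.I * ((h * s n : ℝ) : ℂ) * t)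

lemma es_sq (s : ℕ → ℕ) (h : ℤ) (N : ℕ) (t : ℝ) :
    ((‖es s h N t‖ ^ 2 : ℝ) : ℂ) = ∑ m ∈ Finset.range N, ∑ n ∈ Finset.range N,
      Complex.exp (2 * Real.pi * Complex.I * ((h * ((s m : ℝ) - s n) : ℝ) : ℂ) * t) := by
  push_cast
  rw [← Complex.mul_conj', es, map_sum, Finset.sum_mul_sum]
  refine Finset.sum_congr rfl fun m _ => Finset.sum_congr rfl fun n _ => ?_
  rw [← Complex.exp_conj, ← Complex.exp_add]
  congr 1
  have h2 : (starRingEnd ℂ) 2 = 2 := map_ofNat _ 2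
  simp [h2]
  ring

lemma strictMono_abs (s : ℕ → ℕ) (hs : StrictMono s) (m n : ℕ) :
    ((m : ℤ) - n).natAbs ≤ ((s m : ℤ) - s n).natAbs := by
  have key : ∀ m k : ℕ, s m + k ≤ s (m + k) := by
    intro m k
    induction k with
    | zero => simp
    | succ k ih => have := hs (show m + k < m + (k+1) by omega); omega
  rcases le_total m n with h | h
  · have := key m (n - m); rw [Nat.add_sub_cancel' h] at this; omega
  · have := key n (m - n); rw [Nat.add_sub_cancel' h] at this; omega

lemma es_integral (μ : Measure ℝ) [IsProbabilityMeasure μ] (C δ : ℝ) (hC : 0 ≤ C)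
    (hδ : 0 < δ) (hδ' : δ ≤ 1 / 2) (hft : ∀ ξ : ℝ, ‖ft μ ξ‖ ≤ C * (|ξ| + 1) ^ (-δ))
    (s : ℕ → ℕ) (hs : StrictMono s) (h : ℤ) (hh : h ≠ 0) (N : ℕ) :
    ∫ t, ‖es s h N t‖ ^ 2 ∂μ ≤ 4 * C * N * (N : ℝ) ^ (1 - δ) := by
  have h1 : ((∫ t, ‖es s h N t‖ ^ 2 ∂μ : ℝ) : ℂ) = ∑ m ∈ Finset.range N, ∑ n ∈ Finset.range N,
      ft μ (h * ((s m : ℝ) - s n)) := by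
    rw [← integral_complex_ofReal]
    simp_rw [es_sq]
    rw [integral_finsetSum _ fun m _ => integrable_finsetSum _ fun n _ => integrable_expI μ _]
    refine Finset.sum_congr rfl fun m _ => ?_
    rw [integral_finsetSum _ fun n _ => integrable_expI μ _]
    rfl
  have h2 : ∫ t, ‖es s h N t‖ ^ 2 ∂μ ≤ ‖((∫ t, ‖es s h N t‖ ^ 2 ∂μ : ℝ) : ℂ)‖ := by
    rw [Complex.norm_real]; exact le_abs_self _
  refine h2.trans ?_
  rw [h1]
  have h3 : ∀ m n : ℕ, ‖ft μ (h * ((s m : ℝ) - s n))‖ ≤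
      C * (((((m : ℤ) - n).natAbs : ℕ) : ℝ) + 1) ^ (-δ) := by
    intro m n
    refine (hft _).trans (mul_le_mul_of_nonneg_left ?_ hC)
    refine Real.rpow_le_rpow_of_nonpos (by positivity) ?_ (by linarith)
    have e : |(h : ℝ) * ((s m : ℝ) - s n)| = ((h * ((s m : ℤ) - s n)).natAbs : ℝ) := by
      rw [Nat.cast_natAbs]; push_cast; rfl
    rw [e]
    have : ((m : ℤ) - n).natAbs ≤ (h * ((s m : ℤ) - s n)).natAbs := by
      rw [Int.natAbs_mul]
      refine (strictMono_abs s hs m n).trans (Nat.le_mul_of_pos_left _ (Int.natAbs_pos.2 hh))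
    have : ((((m : ℤ) - n).natAbs : ℕ) : ℝ) ≤ ((h * ((s m : ℤ) - s n)).natAbs : ℝ) := by
      exact_mod_cast this
    linarith
  calc _ ≤ ∑ m ∈ Finset.range N, ∑ n ∈ Finset.range N,
        C * (((((m : ℤ) - n).natAbs : ℕ) : ℝ) + 1) ^ (-δ) :=
        (norm_sum_le _ _).trans (Finset.sum_le_sum fun m _ =>
          (norm_sum_le _ _).trans (Finset.sum_le_sum fun n _ => h3 m n))
    _ ≤ ∑ m ∈ Finset.range N, 4 * C * (N : ℝ) ^ (1 - δ) := by
        refine Finset.sum_le_sum fun m hm => ?_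
        rw [← Finset.mul_sum]
        have := sum_abs_le (fun k => ((k : ℝ) + 1) ^ (-δ)) (fun k => by positivity) N m
          (Finset.mem_range.1 hm)
        have h5 := sum_pow_le δ hδ hδ' N
        have h6 := mul_le_mul_of_nonneg_left (this.trans
          (mul_le_mul_of_nonneg_left h5 (by norm_num))) hC
        linarith
    _ = _ := by simp; ring

lemma interp (p : ℕ) (hp : p ≠ 0) (c : ℕ → ℝ) (hc : ∀ n, |c n| ≤ 1)
    (hlim : Tendsto (fun k : ℕ => (∑ n ∈ Finset.range ((k + 1) ^ p), c n) / (((k + 1) ^ p : ℕ) : ℝ))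
      atTop (nhds 0)) :
    Tendsto (fun N : ℕ => (∑ n ∈ Finset.range N, c n) / (N : ℝ)) atTop (nhds 0) := by
  have key : Tendsto (fun N : ℕ => (∑ n ∈ Finset.range N, (1 + c n)) / (N : ℝ)) atTop (nhds 1) := by
    refine tendsto_div_of_monotone_of_exists_subseq_tendsto_div
      (fun N => ∑ n ∈ Finset.range N, (1 + c n)) 1 ?_ ?_
    · refine monotone_nat_of_le_succ fun n => ?_
      rw [Finset.sum_range_succ]
      have := (abs_le.1 (hc n)).1
      linarith
    · intro a ha
      refine ⟨fun k => (k + 1) ^ p, ?_, ?_, ?_⟩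
      · have h1 : Tendsto (fun k : ℕ => (1 + 1 / ((k : ℝ) + 1)) ^ p) atTop (nhds ((1 + 0) ^ p)) :=
          (tendsto_const_nhds.add tendsto_one_div_add_atTop_nhds_zero_nat).pow p
        rw [add_zero, one_pow] at h1
        filter_upwards [h1.eventually_lt_const ha] with k hk
        have hk1 : (0 : ℝ) < (k : ℝ) + 1 := by positivity
        have : ((k : ℝ) + 1 + 1) = (1 + 1 / ((k : ℝ) + 1)) * ((k : ℝ) + 1) := by field_simp
        push_cast
        rw [this, mul_pow]
        gcongr
      · exact (tendsto_pow_atTop hp).comp (tendsto_add_atTop_nat 1)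
      · have h1 := hlim.const_add 1
        rw [add_zero] at h1
        refine h1.congr fun k => ?_
        have : (((k + 1) ^ p : ℕ) : ℝ) ≠ 0 := by positivity
        rw [Finset.sum_add_distrib, add_div]
        congr 1
        simp only [Finset.sum_const, Finset.card_range, nsmul_eq_mul, mul_one]
        rw [div_self this]
  have h2 := key.sub_const 1
  rw [sub_self] at h2
  refine h2.congr' ?_
  filter_upwards [eventually_gt_atTop 0] with N hN
  have : (N : ℝ) ≠ 0 := by positivity
  rw [Finset.sum_add_distrib, add_div]
  simp [this]

lemma es_ae (μ : Measure ℝ) [IsProbabilityMeasure μ] (C δ : ℝ) (hC : 0 ≤ C)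
    (hδ : 0 < δ) (hδ' : δ ≤ 1 / 2) (hft : ∀ ξ : ℝ, ‖ft μ ξ‖ ≤ C * (|ξ| + 1) ^ (-δ))
    (s : ℕ → ℕ) (hs : StrictMono s) (h : ℤ) (hh : h ≠ 0) :
    ∀ᵐ t ∂μ, Tendsto (fun N : ℕ => es s h N t / (N : ℂ)) atTop (nhds 0) := by
  obtain ⟨p, hp⟩ := exists_nat_gt (1 / δ)
  have hp0 : p ≠ 0 := by
    rintro rfl
    have : 0 < 1 / δ := by positivity
    simp at hp; linarith
  have hpδ : 1 < p * δ := by rwa [div_lt_iff₀ hδ] at hp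
  let c : ℕ → ℕ := fun k => (k + 1) ^ p
  let F : ℕ → ℝ → ℝ := fun k t => (‖es s h (c k) t‖ / c k) ^ 2
  have hcont : ∀ N, Continuous (es s h N) := fun N => by
    unfold es; fun_prop
  have hFc : ∀ k, Continuous (F k) := fun k => ((hcont _).norm.div_const _).pow 2
  have hbd : ∀ N t, ‖es s h N t‖ ≤ N := fun N t => by
    refine (norm_sum_le _ _).trans ?_
    rw [Finset.sum_congr rfl fun n _ => norm_expI _ _]
    simp
  have hFint : ∀ k, Integrable (F k) μ := fun k => by
    refine (integrable_const (1 : ℝ)).mono' (hFc k).aestronglyMeasurable (ae_of_all _ fun t => ?_)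
    have hc : (0 : ℝ) < c k := by simp only [c]; positivity
    have : ‖es s h (c k) t‖ / c k ≤ 1 := (div_le_one hc).2 (hbd _ _)
    rw [Real.norm_of_nonneg (by positivity)]
    exact pow_le_one₀ (by positivity) this
  have hFle : ∀ k, ∫ t, F k t ∂μ ≤ 4 * C * ((k : ℝ) + 1) ^ (-(p * δ)) := fun k => by
    have hc : (0 : ℝ) < c k := by simp only [c]; positivity
    simp only [F, div_pow]
    rw [integral_div, div_le_iff₀ (by positivity)]
    refine (es_integral μ C δ hC hδ hδ' hft s hs h hh (c k)).trans (le_of_eq ?_)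
    have e : ((k : ℝ) + 1) ^ (-(p * δ)) = (c k : ℝ) ^ (-δ) := by
      simp only [c]; push_cast
      rw [← Real.rpow_natCast, ← Real.rpow_mul (by positivity)]; congr 1; ring
    rw [e, sub_eq_add_neg, Real.rpow_add hc, Real.rpow_one]; ring
  have hsum : Summable fun k : ℕ => 4 * C * ((k : ℝ) + 1) ^ (-(p * δ)) := by
    apply Summable.mul_left
    have := (summable_nat_add_iff 1).2 (Real.summable_nat_rpow.2 (show -(p * δ) < -1 by linarith))
    simpa using this
  have hl : ∫⁻ t, ∑' k, ENNReal.ofReal (F k t) ∂μ ≠ ⊤ := by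
    rw [lintegral_tsum fun k => (hFc k).measurable.ennreal_ofReal.aemeasurable]
    refine ne_top_of_le_ne_top hsum.tsum_ofReal_ne_top (ENNReal.tsum_le_tsum fun k => ?_)
    rw [← ofReal_integral_eq_lintegral_ofReal (hFint k) (ae_of_all _ fun t => by
      simp only [F]; positivity)]
    exact ENNReal.ofReal_le_ofReal (hFle k)
  have hae := ae_lt_top' (AEMeasurable.tsum fun k =>
    (hFc k).measurable.ennreal_ofReal.aemeasurable) hl
  filter_upwards [hae] with t ht
  have h0 := ENNReal.tendsto_atTop_zero_of_tsum_ne_top ht.ne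
  have h1 : Tendsto (fun k => F k t) atTop (nhds 0) := by
    have := (ENNReal.tendsto_toReal ENNReal.zero_ne_top).comp h0
    refine this.congr fun k => ?_
    simp only [Function.comp]
    exact ENNReal.toReal_ofReal (by simp only [F]; positivity)
  have h2 : Tendsto (fun k => ‖es s h (c k) t‖ / c k) atTop (nhds 0) := by
    have := h1.sqrt
    rw [Real.sqrt_zero] at this
    refine this.congr fun k => ?_
    exact Real.sqrt_sq (by positivity)
  let e : ℕ → ℂ := fun n => Complex.exp (2 * Real.pi * Complex.I * ((h * s n : ℝ) : ℂ) * t)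
  have he : ∀ n, ‖e n‖ = 1 := fun n => norm_expI _ _
  have hre : Tendsto (fun N : ℕ => (∑ n ∈ Finset.range N, (e n).re) / (N : ℝ)) atTop (nhds 0) := by
    refine interp p hp0 _ (fun n => (Complex.abs_re_le_norm _).trans (he n).le) ?_
    refine squeeze_zero_norm (fun k => ?_) h2
    rw [norm_div, Real.norm_natCast, ← Complex.re_sum]
    gcongr
    exact Complex.abs_re_le_norm _
  have him : Tendsto (fun N : ℕ => (∑ n ∈ Finset.range N, (e n).im) / (N : ℝ)) atTop (nhds 0) := by
    refine interp p hp0 _ (fun n => (Complex.abs_im_le_norm _).trans (he n).le) ?_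
    refine squeeze_zero_norm (fun k => ?_) h2
    rw [norm_div, Real.norm_natCast, ← Complex.im_sum]
    gcongr
    exact Complex.abs_im_le_norm _
  have h3 : Tendsto (fun N : ℕ => (((∑ n ∈ Finset.range N, (e n).re) / (N : ℝ) : ℝ) : ℂ) +
      (((∑ n ∈ Finset.range N, (e n).im) / (N : ℝ) : ℝ) : ℂ) * Complex.I) atTop (nhds 0) := by
    have := ((Complex.continuous_ofReal.tendsto _).comp hre).add
      (((Complex.continuous_ofReal.tendsto _).comp him).mul_const Complex.I)
    simpa using this
  refine h3.congr fun N => ?_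
  rw [← Complex.re_sum, ← Complex.im_sum]
  push_cast
  rw [div_mul_eq_mul_div, ← add_div, Complex.re_add_im]
  rfl

/-- if the Fourier transform of a Borel probability measure `μ` on `ℝ` has
power decay `O(|ξ|^{-γ})` at infinity for some `γ > 0`, then for every strictly increasing
sequence of positive integers `(s n)`, `(s n * x)` is equidistributed mod 1 for `μ`-a.e. `x`;
in particular `μ`-a.e. `x` is normal in every integer base `b ≥ 2`. -/
theorem stmt4
    (μ : Measure ℝ) [IsProbabilityMeasure μ]
    (γ : ℝ) (hγ : 0 < γ)
    (hdecay : (fun ξ : ℝ => ∫ t, Complex.exp (2 * Real.pi * Complex.I * ξ * t) ∂μ)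
      =O[Filter.cocompact ℝ] fun ξ : ℝ => |ξ| ^ (-γ)) :
    (∀ s : ℕ → ℕ, StrictMono s → (∀ n, 0 < s n) →
      ∀ᵐ x ∂μ, EquidistributedMod1 (fun n => (s n : ℝ) * x)) ∧
    (∀ᵐ x ∂μ, ∀ b : ℕ, 2 ≤ b →
      EquidistributedMod1 (fun n => (b : ℝ) ^ n * x)) := by
  have hdec : (fun ξ : ℝ => ft μ ξ) =O[Filter.cocompact ℝ] fun ξ : ℝ => |ξ| ^ (-γ) := hdecay
  obtain ⟨C, hC, δ, hδ, hδ', hft⟩ := decay_int μ γ hγ hdec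
  have main : ∀ s : ℕ → ℕ, StrictMono s →
      ∀ᵐ x ∂μ, EquidistributedMod1 (fun n => (s n : ℝ) * x) := by
    intro s hs
    have hs' : StrictMono fun n => s (n + 1) := fun m n hmn => hs (by omega)
    have h1 : ∀ᵐ t ∂μ, ∀ h : ℤ, h ≠ 0 →
        Tendsto (fun N : ℕ => es (fun n => s (n + 1)) h N t / (N : ℂ)) atTop (nhds 0) := by
      rw [ae_all_iff]
      intro h
      by_cases hh : h = 0
      · exact ae_of_all _ fun t h0 => absurd hh h0
      · filter_upwards [es_ae μ C δ hC hδ hδ' hft _ hs' h hh] with t ht _ using ht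
    filter_upwards [h1] with t ht
    refine weyl_criterion _ fun h hh => (ht h hh).congr fun N => ?_
    rw [es]
    congr 1
    refine Finset.sum_congr rfl fun n _ => ?_
    rw [fourier_coe_apply]
    congr 1
    push_cast
    ring
  refine ⟨fun s hs _ => main s hs, ?_⟩
  rw [ae_all_iff]
  intro b
  by_cases hb : 2 ≤ b
  · filter_upwards [main (fun n => b ^ n) (pow_right_strictMono₀ (by omega))] with x hx _
    simpa using hx
  · exact ae_of_all _ fun t h0 => absurd h0 hb
end

section
/- Fix c_0 > 0, θ > 1 and a closed interval [H_1, H_2] ⊂ ℝ. For ε > 0 and N ∈ ℕ let Γ_N(ε) = {x ∈ [H_1, H_2] : #{1 ≤ k ≤ N : ‖c_0 θ^k x‖ < 1/(2(1+θ))} > (1−ε)N}. Then for every ε ∈ (0, 1/2) there exist a constant C > 0 and N_0 ∈ ℕ such that for all N ≥ N_0, the set Γ_N(ε) can be covered by at most C·exp(ω(ε)N) intervals each of length c_0^{−1}θ^{−N}, where ω(ε) = −ε log ε − (1−ε)log(1−ε) + 2ε log(θ+2). -/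
open Real

/-- The distance from a real number to its nearest integer. -/
noncomputable def distNearestInt (x : ℝ) : ℝ := |x - round x|

/-- Candidate integers for `round (c₀ θ^n x)` given the set `B` of bad indices. -/
noncomputable def candT (θ : ℝ) (S : Finset ℤ) (B : Finset ℕ) : ℕ → Finset ℤ
  | 0 => S
  | n + 1 => (candT θ S B n).biUnion fun K =>
      if n ∈ B ∨ n + 1 ∈ B then
        Finset.Icc ⌈θ * K - (1 + θ) / 2⌉ ⌊θ * K + (1 + θ) / 2⌋
      else {round (θ * K)}

noncomputable def candQ (θ : ℝ) (B : Finset ℕ) (k : ℕ) : ℝ := if k ∈ B then θ + 2 else 1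

lemma candQ_one_le (θ : ℝ) (hθ : 1 < θ) (B : Finset ℕ) (k : ℕ) : 1 ≤ candQ θ B k := by
  unfold candQ; split_ifs <;> linarith

lemma card_step (θ : ℝ) (hθ : 1 < θ) (K : ℤ) :
    ((Finset.Icc ⌈θ * K - (1 + θ) / 2⌉ ⌊θ * K + (1 + θ) / 2⌋).card : ℝ) ≤ θ + 2 := by
  rw [Int.card_Icc]
  have h1 := Int.le_ceil (θ * K - (1 + θ) / 2)
  have h2 := Int.floor_le (θ * K + (1 + θ) / 2)
  set a := ⌈θ * K - (1 + θ) / 2⌉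
  set b := ⌊θ * K + (1 + θ) / 2⌋
  rcases le_total 0 (b + 1 - a) with h | h
  · have : (((b + 1 - a).toNat : ℤ) : ℝ) = ((b + 1 - a : ℤ) : ℝ) := by rw [Int.toNat_of_nonneg h]
    rw [Int.cast_natCast] at this
    rw [this]; push_cast; linarith
  · rw [Int.toNat_of_nonpos h]; push_cast; linarith

lemma card_candT (θ : ℝ) (hθ : 1 < θ) (S : Finset ℤ) (B : Finset ℕ) (n : ℕ) :
    ((candT θ S B n).card : ℝ) ≤
      S.card * (∏ k ∈ Finset.range n, candQ θ B k ^ 2) * candQ θ B n := by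
  induction n with
  | zero =>
    simp only [candT, Finset.range_zero, Finset.prod_empty, mul_one]
    exact le_mul_of_one_le_right (by positivity) (candQ_one_le θ hθ B 0)
  | succ n ih =>
    have h1 := candQ_one_le θ hθ B n
    have h2 := candQ_one_le θ hθ B (n + 1)
    have key : ((candT θ S B (n + 1)).card : ℝ) ≤
        (candT θ S B n).card * (candQ θ B n * candQ θ B (n + 1)) := by
      simp only [candT]
      refine (Nat.cast_le.mpr Finset.card_biUnion_le).trans ?_
      push_cast
      rw [← nsmul_eq_mul]
      refine Finset.sum_le_card_nsmul _ _ _ fun K _ => ?_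
      split_ifs with h
      · refine (card_step θ hθ K).trans ?_
        rcases h with h | h
        · have : candQ θ B n = θ + 2 := by simp [candQ, h]
          rw [this]; nlinarith
        · have : candQ θ B (n + 1) = θ + 2 := by simp [candQ, h]
          rw [this]; nlinarith
      · simp only [Finset.card_singleton, Nat.cast_one]; nlinarith
    refine key.trans ?_
    rw [Finset.prod_range_succ]
    calc _ ≤ (S.card * (∏ k ∈ Finset.range n, candQ θ B k ^ 2) * candQ θ B n) *
          (candQ θ B n * candQ θ B (n + 1)) := by gcongr
      _ = _ := by ring

lemma card_candT' (θ : ℝ) (hθ : 1 < θ) (S : Finset ℤ) (B : Finset ℕ) (n : ℕ) :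
    ((candT θ S B n).card : ℝ) ≤ S.card * ((θ + 2) ^ 2) ^ B.card := by
  refine (card_candT θ hθ S B n).trans ?_
  have h1 := candQ_one_le θ hθ B n
  have h3 : (∏ k ∈ Finset.range (n + 1), candQ θ B k ^ 2) ≤ ((θ + 2) ^ 2) ^ B.card := by
    have : ∀ k, candQ θ B k ^ 2 = if k ∈ B then (θ + 2) ^ 2 else 1 := by
      intro k; unfold candQ; split_ifs <;> simp
    simp only [this]
    rw [Finset.prod_ite, Finset.prod_const, Finset.prod_const_one, mul_one]
    refine pow_le_pow_right₀ (by nlinarith) (Finset.card_le_card ?_)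
    intro k hk
    exact (Finset.mem_filter.mp hk).2
  have h4 : 0 ≤ ∏ k ∈ Finset.range n, candQ θ B k ^ 2 :=
    Finset.prod_nonneg fun k _ => sq_nonneg _
  rw [mul_assoc]
  refine mul_le_mul_of_nonneg_left ?_ (by positivity)
  rw [Finset.prod_range_succ] at h3
  refine le_trans ?_ h3
  exact mul_le_mul_of_nonneg_left (by nlinarith) h4

lemma mem_candT (c₀ θ : ℝ) (hθ : 1 < θ) (x : ℝ) (S : Finset ℤ) (B : Finset ℕ)
    (N : ℕ) (hS : round (c₀ * x) ∈ S)
    (hB : ∀ k ≤ N, k ∉ B → distNearestInt (c₀ * θ ^ k * x) < 1 / (2 * (1 + θ)))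
    (n : ℕ) (hn : n ≤ N) : round (c₀ * θ ^ n * x) ∈ candT θ S B n := by
  induction n with
  | zero => simpa [candT] using hS
  | succ n ih =>
    simp only [candT, Finset.mem_biUnion]
    refine ⟨_, ih (by omega), ?_⟩
    have e : c₀ * θ ^ (n + 1) * x = θ * (c₀ * θ ^ n * x) := by ring
    have a1 := abs_sub_round (c₀ * θ ^ n * x)
    have a2 := abs_sub_round (c₀ * θ ^ (n + 1) * x)
    have g1 := hB n (by omega)
    have g2 := hB (n + 1) hn
    unfold distNearestInt at g1 g2
    rw [e] at a2 g2 ⊢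
    set y := c₀ * θ ^ n * x
    split_ifs with h
    · rw [abs_le] at a1 a2
      rw [Finset.mem_Icc, Int.ceil_le, Int.le_floor]
      constructor <;> nlinarith
    · push Not at h
      have b1 := g1 h.1
      have b2 := g2 h.2
      rw [Finset.mem_singleton]
      set d := 1 / (2 * (1 + θ)) with hd
      have hd' : d * (1 + θ) = 1 / 2 := by
        rw [hd]; field_simp
      rw [abs_lt] at b1 b2
      symm
      rw [round_eq, Int.floor_eq_iff]
      constructor <;> nlinarith

lemma count_small (ε : ℝ) (hε : ε ∈ Set.Ioo (0 : ℝ) (1 / 2)) (N : ℕ) :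
    ((((Finset.Icc 1 N).powerset.filter fun B => (B.card : ℝ) ≤ ε * N).card : ℕ) : ℝ) ≤
      Real.exp ((-ε * Real.log ε - (1 - ε) * Real.log (1 - ε)) * N) := by
  obtain ⟨h0, h1⟩ := hε
  have hs := Finset.sum_pow_mul_eq_add_pow ε (1 - ε) (Finset.Icc 1 N)
  rw [add_sub_cancel, one_pow] at hs
  set P := (Finset.Icc 1 N).powerset.filter fun B => (B.card : ℝ) ≤ ε * N with hP
  have h2 : ∑ t ∈ P, Real.exp ((ε * Real.log ε + (1 - ε) * Real.log (1 - ε)) * N) ≤ 1 := by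
    refine LE.le.trans ?_ hs.le
    refine (Finset.sum_le_sum fun t ht => ?_).trans
      (Finset.sum_le_sum_of_subset_of_nonneg (Finset.filter_subset _ _) fun t _ _ => ?_)
    · rw [hP, Finset.mem_filter, Finset.mem_powerset] at ht
      have hc := Finset.card_le_card ht.1
      rw [Nat.card_Icc, Nat.add_sub_cancel] at hc
      rw [Nat.card_Icc, Nat.add_sub_cancel]
      have e1 : ε ^ t.card = Real.exp (t.card * Real.log ε) := by
        rw [Real.exp_nat_mul, Real.exp_log h0]
      have e2 : (1 - ε) ^ (N - t.card) = Real.exp (((N - t.card : ℕ) : ℝ) * Real.log (1 - ε)) := by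
        rw [Real.exp_nat_mul, Real.exp_log (by linarith)]
      rw [e1, e2, ← Real.exp_add, Real.exp_le_exp, Nat.cast_sub hc]
      have hl : Real.log ε ≤ Real.log (1 - ε) := Real.log_le_log h0 (by linarith)
      nlinarith [mul_nonneg (sub_nonneg.mpr ht.2) (sub_nonneg.mpr hl)]
    · have : 0 ≤ 1 - ε := by linarith
      positivity
  rw [Finset.sum_const, nsmul_eq_mul] at h2
  have h3 : (-ε * Real.log ε - (1 - ε) * Real.log (1 - ε)) * N =
    -((ε * Real.log ε + (1 - ε) * Real.log (1 - ε)) * N) := by ring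
  rw [h3, Real.exp_neg, ← one_div, le_div_iff₀ (Real.exp_pos _)]
  exact h2

/-- the combinatorial covering lemma. For `ε ∈ (0, 1/2)` and all large `N`,
the set `Γ_N(ε)` of `x ∈ [H₁, H₂]` such that `‖c₀ θ^k x‖ < 1/(2(1+θ))` for more than
`(1-ε)N` of the indices `1 ≤ k ≤ N` can be covered by at most `C · exp(ω(ε)N)` intervals
of length `c₀⁻¹ θ^{-N}`, where
`ω(ε) = -ε log ε - (1-ε) log (1-ε) + 2ε log (θ+2)`. -/
theorem stmt6
    (c₀ : ℝ) (hc₀ : 0 < c₀) (θ : ℝ) (hθ : 1 < θ) (H₁ H₂ : ℝ) (hH : H₁ ≤ H₂)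
    (ε : ℝ) (hε : ε ∈ Set.Ioo (0 : ℝ) (1 / 2)) :
    ∃ C > (0 : ℝ), ∃ N₀ : ℕ, ∀ N : ℕ, N₀ ≤ N →
      ∃ F : Finset ℝ,
        (F.card : ℝ) ≤ C * Real.exp
          ((-ε * Real.log ε - (1 - ε) * Real.log (1 - ε) + 2 * ε * Real.log (θ + 2)) * N) ∧
        {x ∈ Set.Icc H₁ H₂ |
            (1 - ε) * N <
              (((Finset.Icc 1 N).filter fun k =>
                  distNearestInt (c₀ * θ ^ k * x) < 1 / (2 * (1 + θ))).card : ℝ)}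
          ⊆ ⋃ y ∈ F, Set.Icc y (y + c₀⁻¹ * (θ ^ N)⁻¹) := by
  classical
  set S : Finset ℤ := Finset.Icc (round (c₀ * H₁)) (round (c₀ * H₂)) with hS
  have hmono : ∀ a b : ℝ, a ≤ b → round a ≤ round b := by
    intro a b hab
    rw [round_eq, round_eq]
    exact Int.floor_le_floor (by linarith)
  refine ⟨(S.card + 1) * (θ + 2) ^ 2, by positivity, 0, fun N _ => ?_⟩
  set P := (Finset.Icc 1 N).powerset.filter fun B => (B.card : ℝ) ≤ ε * N with hP
  refine ⟨P.biUnion fun B => (candT θ S (insert 0 B) N).image fun K : ℤ =>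
    ((K : ℝ) - 1 / 2) * (c₀⁻¹ * (θ ^ N)⁻¹), ?_, ?_⟩
  · have hcard : ∀ B ∈ P, ((((candT θ S (insert 0 B) N).image fun K : ℤ =>
        ((K : ℝ) - 1 / 2) * (c₀⁻¹ * (θ ^ N)⁻¹)).card : ℕ) : ℝ) ≤
        (S.card + 1) * (θ + 2) ^ 2 * Real.exp (2 * ε * Real.log (θ + 2) * N) := by
      intro B hB
      rw [hP, Finset.mem_filter] at hB
      refine (Nat.cast_le.mpr Finset.card_image_le).trans ?_
      refine (card_candT' θ hθ S _ N).trans ?_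
      have hl : 0 ≤ Real.log (θ + 2) := Real.log_nonneg (by linarith)
      have e : ((θ + 2) ^ 2) ^ B.card ≤ Real.exp (2 * ε * Real.log (θ + 2) * N) := by
        rw [← pow_mul, ← Real.exp_log (show 0 < θ + 2 by linarith), ← Real.exp_nat_mul,
          Real.exp_le_exp, Real.exp_log (show 0 < θ + 2 by linarith)]
        push_cast
        nlinarith [mul_le_mul_of_nonneg_right hB.2 hl]
      calc (S.card : ℝ) * ((θ + 2) ^ 2) ^ (insert 0 B).card
          ≤ (S.card + 1) * ((θ + 2) ^ 2) ^ (B.card + 1) := by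
            gcongr
            · linarith
            · nlinarith
            · exact Finset.card_insert_le _ _
        _ = (S.card + 1) * (θ + 2) ^ 2 * ((θ + 2) ^ 2) ^ B.card := by ring
        _ ≤ _ := by gcongr
    refine (Nat.cast_le.mpr Finset.card_biUnion_le).trans ?_
    push_cast
    refine (Finset.sum_le_card_nsmul _ _ _ hcard).trans ?_
    rw [nsmul_eq_mul, add_mul _ (2 * ε * Real.log (θ + 2)), Real.exp_add]
    calc _ ≤ Real.exp ((-ε * Real.log ε - (1 - ε) * Real.log (1 - ε)) * N) *
          ((S.card + 1) * (θ + 2) ^ 2 * Real.exp (2 * ε * Real.log (θ + 2) * N)) := by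
            gcongr
            exact count_small ε hε N
      _ = _ := by ring
  · rintro x ⟨⟨hx1, hx2⟩, hx⟩
    set B := (Finset.Icc 1 N).filter fun k =>
      ¬ distNearestInt (c₀ * θ ^ k * x) < 1 / (2 * (1 + θ)) with hB
    have hBP : B ∈ P := by
      rw [hP, Finset.mem_filter, Finset.mem_powerset]
      refine ⟨Finset.filter_subset _ _, ?_⟩
      have := Finset.card_filter_add_card_filter_not (s := Finset.Icc 1 N)
        (fun k => distNearestInt (c₀ * θ ^ k * x) < 1 / (2 * (1 + θ)))
      rw [Nat.card_Icc, Nat.add_sub_cancel] at this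
      have h' := congrArg (Nat.cast : ℕ → ℝ) this
      push_cast at h'
      linarith
    have hm := mem_candT c₀ θ hθ x S (insert 0 B) N
      (by rw [hS, Finset.mem_Icc]
          exact ⟨hmono _ _ (by gcongr), hmono _ _ (by gcongr)⟩)
      (by intro k hk hkB
          rw [Finset.mem_insert, hB, Finset.mem_filter, Finset.mem_Icc] at hkB
          push Not at hkB
          exact not_le.mp fun hh => absurd (hkB.2 ⟨by omega, hk⟩) (not_lt.mpr hh)) N le_rfl
    simp only [Set.mem_iUnion]
    refine ⟨_, Finset.mem_biUnion.mpr ⟨B, hBP, Finset.mem_image_of_mem _ hm⟩, ?_⟩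
    have a := abs_sub_round (c₀ * θ ^ N * x)
    rw [abs_le] at a
    set K := round (c₀ * θ ^ N * x)
    have hp : 0 < c₀⁻¹ * (θ ^ N)⁻¹ := by positivity
    have hxe : x = (c₀ * θ ^ N * x) * (c₀⁻¹ * (θ ^ N)⁻¹) := by
      have : θ ^ N ≠ 0 := by positivity
      field_simp
    set y := c₀ * θ ^ N * x
    set r := c₀⁻¹ * (θ ^ N)⁻¹
    rw [hxe]
    constructor <;> nlinarith
end

section
/- Fix c_0 > 0 and θ > 1, and let x ∈ ℝ. For each k ∈ ℕ write c_0 θ^k x = r_k + ε_k with r_k ∈ ℤ and ε_k ∈ (−1/2, 1/2]. If max{|ε_k|, |ε_{k+1}|} < 1/(2(1+θ)), then |r_{k+1} − θ r_k| < 1/2; in particular, r_{k+1} is the unique integer in the open interval (θ r_k − 1/2, θ r_k + 1/2), i.e., r_{k+1} is uniquely determined by r_k. -/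
/-- writing `c₀ θ^k x = r k + e k` with `r k ∈ ℤ` and `e k ∈ (-1/2, 1/2]`,
if `max {|e k|, |e (k+1)|} < 1/(2(1+θ))`, then `|r (k+1) - θ * r k| < 1/2`; in particular
`r (k+1)` is the unique integer in the open interval `(θ * r k - 1/2, θ * r k + 1/2)`. -/
theorem stmt8
    (c₀ : ℝ) (hc₀ : 0 < c₀) (θ : ℝ) (hθ : 1 < θ) (x : ℝ)
    (r : ℕ → ℤ) (e : ℕ → ℝ)
    (hre : ∀ k : ℕ, c₀ * θ ^ k * x = r k + e k ∧ e k ∈ Set.Ioc (-(1 / 2) : ℝ) (1 / 2))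
    (k : ℕ) (hsmall : max |e k| |e (k + 1)| < 1 / (2 * (1 + θ))) :
    |(r (k + 1) : ℝ) - θ * r k| < 1 / 2 ∧
    ((r (k + 1) : ℝ)) ∈ Set.Ioo (θ * r k - 1 / 2) (θ * r k + 1 / 2) ∧
    ∀ z : ℤ, (z : ℝ) ∈ Set.Ioo (θ * r k - 1 / 2) (θ * r k + 1 / 2) → z = r (k + 1) := by
  have h1 := (hre k).1
  have h2 := (hre (k + 1)).1
  have heq : (r (k + 1) : ℝ) - θ * r k = θ * e k - e (k + 1) := by
    rw [pow_succ] at h2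
    linear_combination θ * h1 - h2
  obtain ⟨ha, hb⟩ := max_lt_iff.mp hsmall
  obtain ⟨ha1, ha2⟩ := abs_lt.mp ha
  obtain ⟨hb1, hb2⟩ := abs_lt.mp hb
  have hθ0 : 0 < θ := by linarith
  have hd : θ * (1 / (2 * (1 + θ))) + 1 / (2 * (1 + θ)) = 1 / 2 := by
    field_simp
    ring
  have hm1 := mul_lt_mul_of_pos_left ha1 hθ0
  have hm2 := mul_lt_mul_of_pos_left ha2 hθ0
  have hlo : -(1 / 2) < (r (k + 1) : ℝ) - θ * r k := by
    rw [heq]; linarith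
  have hhi : (r (k + 1) : ℝ) - θ * r k < 1 / 2 := by
    rw [heq]; linarith
  refine ⟨abs_lt.mpr ⟨hlo, hhi⟩, ⟨by linarith, by linarith⟩, ?_⟩
  rintro z ⟨hz1, hz2⟩
  have u1 : (z : ℝ) < r (k + 1) + 1 := by linarith
  have u2 : (r (k + 1) : ℝ) < z + 1 := by linarith
  have v1 : z < r (k + 1) + 1 := by exact_mod_cast u1
  have v2 : r (k + 1) < z + 1 := by exact_mod_cast u2
  omega
end
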